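/- arXiv:2106.07593 — 2 statements merged into one kernel-verified Lean document; each statement's English description precedes it below -/
import Mathlib

section
/- Let s ∈ (0,1) and β ∈ (−1,2s) with β−s ∉ ℤ and β−2s ∉ ℤ. Then the principal value lim_{ε→0⁺} ∫_{|y|>ε} (1 − ((1+y)_+)^β)/|y|^{1+2s} dy exists, and c_{1,s} · p.v.∫_ℝ (1 − ((1+y)_+)^β)/|y|^{1+2s} dy = (Γ(β+1)/Γ(β−2s+1)) · sin(π(β−s))/sin(π(β−2s)). Equivalently, the one-dimensional fractional Laplacian of x ↦ (x_+)^β at x = 1 equals this constant. -/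
open MeasureTheory Real Set Filter

noncomputable section

/-- The constant `c_{1,s} = s 4^s Γ(1/2+s)/(π^{1/2} Γ(1-s))`. -/
def c1s (s : ℝ) : ℝ :=
  s * (4:ℝ) ^ s * Real.Gamma (1/2 + s) / (Real.pi ^ ((1:ℝ)/2) * Real.Gamma (1 - s))

/-- `(t)₊^β`, with the convention that it vanishes for `t ≤ 0` (for every `β`). -/
def powPlus (t β : ℝ) : ℝ := if 0 < t then t ^ β else 0
section Aux
open Asymptotics Topology

/-- The truncated numerator. -/
def fnum (β γ : ℝ) (v : ℝ) : ℝ := (1 - (1 - v) ^ β) * (1 - (1 - v) ^ γ)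

def fcut (β γ : ℝ) : ℝ → ℂ := indicator (Ioo 0 1) (fun v => ((fnum β γ v : ℝ) : ℂ))

lemma fnum_eq (β γ v : ℝ) (hv : v < 1) :
    fnum β γ v = 1 - (1 - v) ^ β - (1 - v) ^ γ + (1 - v) ^ (β + γ) := by
  rw [fnum, Real.rpow_add (by linarith)]; ring

lemma ii_one_sub_rpow (p : ℝ) (hp : -1 < p) :
    IntervalIntegrable (fun v : ℝ => (1 - v) ^ p) volume 0 1 := by
  have := (intervalIntegral.intervalIntegrable_rpow' (a := 1) (b := 0) hp).comp_sub_left 1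
  simpa using this

lemma fcut_integrable (β γ : ℝ) (hβ : -1 < β) (hγ : -1 < γ) (hβγ : -1 < β + γ) :
    Integrable (fcut β γ) := by
  rw [fcut, integrable_indicator_iff measurableSet_Ioo]
  apply Integrable.ofReal
  have h : IntegrableOn (fun v : ℝ => 1 - (1 - v) ^ β - (1 - v) ^ γ + (1 - v) ^ (β + γ))
      (Ioo 0 1) := by
    rw [← integrableOn_Ioc_iff_integrableOn_Ioo, ← intervalIntegrable_iff_integrableOn_Ioc_of_le
      zero_le_one]
    exact (((intervalIntegrable_const).sub (ii_one_sub_rpow β hβ)).sub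
      (ii_one_sub_rpow γ hγ)).add (ii_one_sub_rpow _ hβγ)
  refine h.congr_fun (fun v hv => (fnum_eq β γ v hv.2).symm) measurableSet_Ioo

lemma one_sub_rpow_isBigO (β γ : ℝ) :
    (fun v : ℝ => (1 - v) ^ β - (1 - v) ^ γ) =O[𝓝 0] (fun v : ℝ => v) := by
  have h (p : ℝ) : DifferentiableAt ℝ (fun v : ℝ => (1 - v) ^ p) 0 := by
    apply DifferentiableAt.rpow_const
    · fun_prop
    · left; norm_num
  have := ((h β).sub (h γ)).isBigO_sub
  simpa using this

lemma fcut_bot (β γ : ℝ) : fcut β γ =O[𝓝[>] 0] (fun v : ℝ => v ^ (-(-2) : ℝ)) := by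
  have h1 := (one_sub_rpow_isBigO 0 β).mul (one_sub_rpow_isBigO 0 γ)
  have h2 : (fun v => ((fnum β γ v : ℝ) : ℂ)) =O[𝓝[>] 0] (fun v : ℝ => v ^ (-(-2) : ℝ)) := by
    rw [Complex.isBigO_ofReal_left]
    refine (h1.mono nhdsWithin_le_nhds).congr (fun v => by simp [fnum]) (fun v => ?_)
    norm_num [pow_two]
  refine IsBigO.trans (IsBigO.of_bound 1 (Eventually.of_forall fun v => ?_)) h2
  rw [one_mul]
  exact norm_indicator_le_norm_self _ _

lemma fcut_top (β γ a : ℝ) : fcut β γ =O[atTop] (fun v : ℝ => v ^ (-a : ℝ)) := by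
  refine IsBigO.congr' (isBigO_zero _ _) ?_ EventuallyEq.rfl
  filter_upwards [eventually_gt_atTop 1] with v hv
  simp only [fcut]
  rw [indicator_of_notMem]
  exact fun h => absurd h.2 (by linarith)

lemma mellin_fcut_diff (β γ : ℝ) (hβ : -1 < β) (hγ : -1 < γ) (hβγ : -1 < β + γ) (z : ℂ)
    (hz : -2 < z.re) : DifferentiableAt ℂ (mellin (fcut β γ)) z :=
  mellin_differentiableAt_of_isBigO_rpow
    ((fcut_integrable β γ hβ hγ hβγ).locallyIntegrable.locallyIntegrableOn _)
    (fcut_top β γ (z.re + 1)) (by linarith) (fcut_bot β γ) hz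

lemma mellin_fcut_conv (β γ : ℝ) (hβ : -1 < β) (hγ : -1 < γ) (hβγ : -1 < β + γ) (z : ℂ)
    (hz : -2 < z.re) : MellinConvergent (fcut β γ) z :=
  mellinConvergent_of_isBigO_rpow
    ((fcut_integrable β γ hβ hγ hβγ).locallyIntegrable.locallyIntegrableOn _)
    (fcut_top β γ (z.re + 1)) (by linarith) (fcut_bot β γ) hz

lemma beta_eq (z : ℂ) (hz : 0 < z.re) (p : ℝ) (hp : -1 < p) :
    Complex.betaIntegral z (p + 1) * (Complex.Gamma z)⁻¹
      = Complex.Gamma (p + 1) * (Complex.Gamma (p + 1 + z))⁻¹ := by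
  have hp' : 0 < ((p : ℂ) + 1).re := by simp; linarith
  have h := Complex.Gamma_mul_Gamma_eq_betaIntegral hz hp'
  have h1 := Complex.Gamma_ne_zero_of_re_pos hz
  have h2 : Complex.Gamma (p + 1 + z) ≠ 0 :=
    Complex.Gamma_ne_zero_of_re_pos (by simp at hp' ⊢; linarith)
  rw [add_comm z] at h
  field_simp
  linear_combination -h

lemma mellin_fcut_pos (β γ : ℝ) (hβ : -1 < β) (hγ : -1 < γ) (hβγ : -1 < β + γ) (z : ℂ)
    (hz : 0 < z.re) : mellin (fcut β γ) z =
      Complex.betaIntegral z ((0:ℝ) + 1) - Complex.betaIntegral z (β + 1)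
        - Complex.betaIntegral z (γ + 1) + Complex.betaIntegral z ((β + γ : ℝ) + 1) := by
  have conv (p : ℝ) (hp : -1 < p) := Complex.betaIntegral_convergent (u := z) (v := p + 1) hz
    (by simp; linarith)
  simp only [Complex.betaIntegral]
  rw [← intervalIntegral.integral_sub (conv 0 (by norm_num)) (conv β hβ),
    ← intervalIntegral.integral_sub ((conv 0 (by norm_num)).sub (conv β hβ)) (conv γ hγ),
    ← intervalIntegral.integral_add (((conv 0 (by norm_num)).sub (conv β hβ)).sub (conv γ hγ))
      (conv _ hβγ), intervalIntegral.integral_of_le zero_le_one, integral_Ioc_eq_integral_Ioo,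
      mellin]
  have : (fun t : ℝ => (t:ℂ) ^ (z - 1) • fcut β γ t) =
    indicator (Ioo 0 1) (fun t : ℝ => (t:ℂ) ^ (z - 1) * (fnum β γ t : ℝ)) := by
    funext t
    by_cases ht : t ∈ Ioo (0:ℝ) 1 <;> simp [fcut, ht]
  rw [this, setIntegral_indicator measurableSet_Ioo,
    inter_eq_right.2 (Ioo_subset_Ioi_self : Ioo (0:ℝ) 1 ⊆ Ioi 0)]
  refine setIntegral_congr_fun measurableSet_Ioo (fun t ht => ?_)
  have ht1 : 0 ≤ 1 - t := by linarith [ht.2]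
  have key (p : ℝ) : (1 - (t:ℂ)) ^ ((p:ℂ) + 1 - 1) = (((1 - t) ^ p : ℝ) : ℂ) := by
    rw [add_sub_cancel_right, Complex.ofReal_cpow ht1]; simp
  simp only [key, fnum_eq β γ t ht.2]
  push_cast
  simp
  ring

def Egam (β γ : ℝ) (z : ℂ) : ℂ :=
  (Complex.Gamma (1 + z))⁻¹ - Complex.Gamma (β + 1) * (Complex.Gamma (β + 1 + z))⁻¹
   - Complex.Gamma (γ + 1) * (Complex.Gamma (γ + 1 + z))⁻¹
   + Complex.Gamma ((β + γ : ℝ) + 1) * (Complex.Gamma ((β + γ : ℝ) + 1 + z))⁻¹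

lemma differentiable_rGamma_shift (c : ℂ) :
    Differentiable ℂ (fun z : ℂ => (Complex.Gamma (c + z))⁻¹) :=
  Complex.differentiable_one_div_Gamma.comp ((differentiable_const c).add differentiable_id)

lemma differentiable_Egam (β γ : ℝ) : Differentiable ℂ (Egam β γ) := by
  unfold Egam
  exact (((differentiable_rGamma_shift _).sub ((differentiable_rGamma_shift _).const_mul _)).sub
    ((differentiable_rGamma_shift _).const_mul _)).add
    ((differentiable_rGamma_shift _).const_mul _)

lemma mellin_fcut_eq (β γ : ℝ) (hβ : -1 < β) (hγ : -1 < γ) (hβγ : -1 < β + γ) :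
    EqOn (fun z => mellin (fcut β γ) z * (Complex.Gamma z)⁻¹) (Egam β γ) {z : ℂ | -2 < z.re} := by
  have hopen : IsOpen {z : ℂ | -2 < z.re} := isOpen_lt continuous_const Complex.continuous_re
  refine AnalyticOnNhd.eqOn_of_preconnected_of_eventuallyEq (𝕜 := ℂ) (z₀ := 1) ?_ ?_ ?_ ?_ ?_
  · refine DifferentiableOn.analyticOnNhd (fun z hz => ?_) hopen
    exact ((mellin_fcut_diff β γ hβ hγ hβγ z hz).mul
      (Complex.differentiable_one_div_Gamma z)).differentiableWithinAt
  · exact (differentiable_Egam β γ).differentiableOn.analyticOnNhd hopen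
  · exact (convex_halfSpace_re_gt (-2)).isPreconnected
  · norm_num
  · have : {z : ℂ | 0 < z.re} ∈ 𝓝 (1:ℂ) :=
      (isOpen_lt continuous_const Complex.continuous_re).mem_nhds (by simp)
    filter_upwards [this] with z hz
    rw [mellin_fcut_pos β γ hβ hγ hβγ z hz]
    simp only [add_mul, sub_mul]
    rw [beta_eq z hz 0 (by norm_num), beta_eq z hz β hβ, beta_eq z hz γ hγ, beta_eq z hz _ hβγ]
    simp [Egam]

/-- The real integral. -/
def Jint (β γ a : ℝ) : ℝ := ∫ v in Ioo (0:ℝ) 1, fnum β γ v * v ^ (-a - 1)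

lemma mellin_integrand (β γ a : ℝ) :
    EqOn (fun t : ℝ => (t:ℂ) ^ ((-a : ℝ) - 1 : ℂ) • fcut β γ t)
     (indicator (Ioo 0 1) (fun t : ℝ => ((fnum β γ t * t ^ (-a - 1) : ℝ) : ℂ))) (Ioi 0) := by
  intro t ht
  by_cases h : t ∈ Ioo (0:ℝ) 1
  · simp only [fcut, h, indicator_of_mem, smul_eq_mul, Complex.ofReal_mul]
    rw [Complex.ofReal_cpow h.1.le, mul_comm]
    simp
  · simp [fcut, h]

lemma mellin_real (β γ a : ℝ) : mellin (fcut β γ) ((-a : ℝ) : ℂ) = (Jint β γ a : ℂ) := by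
  rw [mellin, setIntegral_congr_fun measurableSet_Ioi (mellin_integrand β γ a),
    setIntegral_indicator measurableSet_Ioo,
    inter_eq_right.2 (Ioo_subset_Ioi_self : Ioo (0:ℝ) 1 ⊆ Ioi 0), integral_complex_ofReal, Jint]

lemma Jint_integrable (β γ a : ℝ) (hβ : -1 < β) (hγ : -1 < γ) (hβγ : -1 < β + γ) (ha : a < 2) :
    IntegrableOn (fun v : ℝ => fnum β γ v * v ^ (-a - 1)) (Ioo 0 1) := by
  have h := mellin_fcut_conv β γ hβ hγ hβγ ((-a : ℝ) : ℂ) (by simp; linarith)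
  rw [MellinConvergent, integrableOn_congr_fun (mellin_integrand β γ a) measurableSet_Ioi] at h
  have h2 := h.mono_set (fun x (hx : x ∈ Ioo (0:ℝ) 1) => hx.1)
  rw [integrableOn_congr_fun (g := fun t : ℝ => ((fnum β γ t * t ^ (-a - 1) : ℝ) : ℂ))
    (fun t ht => indicator_of_mem ht _) measurableSet_Ioo] at h2
  exact h2.re
lemma real_eq (β γ a : ℝ) (hβ : -1 < β) (hγ : -1 < γ) (hβγ : -1 < β + γ) (ha : a < 2)
    (hsum : β + γ + 1 = a) :
    Jint β γ a * (Real.Gamma (-a))⁻¹ = (Real.Gamma (1 - a))⁻¹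
      - Real.Gamma (β + 1) * (Real.Gamma (β + 1 - a))⁻¹
      - Real.Gamma (a - β) * (Real.Gamma (-β))⁻¹ := by
  have h := mellin_fcut_eq β γ hβ hγ hβγ (x := ((-a : ℝ) : ℂ)) (by simp; linarith)
  simp only [mellin_real, Egam] at h
  have e1 : (1 : ℂ) + ((-a : ℝ) : ℂ) = ((1 - a : ℝ) : ℂ) := by push_cast; ring
  have e2 : (β : ℂ) + 1 + ((-a : ℝ) : ℂ) = ((β + 1 - a : ℝ) : ℂ) := by push_cast; ring
  have e3 : (γ : ℂ) + 1 + ((-a : ℝ) : ℂ) = ((-β : ℝ) : ℂ) := by rw [← hsum]; push_cast; ring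
  have e4 : ((β + γ : ℝ) : ℂ) + 1 + ((-a : ℝ) : ℂ) = 0 := by rw [← hsum]; push_cast; ring
  have e5 : (β : ℂ) + 1 = ((β + 1 : ℝ) : ℂ) := by push_cast; ring
  have e6 : (γ : ℂ) + 1 = ((a - β : ℝ) : ℂ) := by rw [← hsum]; push_cast; ring
  rw [e1, e2, e3, e4, e5, e6, Complex.Gamma_zero] at h
  simp only [Complex.Gamma_ofReal, inv_zero, mul_zero, add_zero] at h
  exact_mod_cast h

/-- derivative of `1/Γ` -/
def dR (z : ℂ) : ℂ := deriv (fun w : ℂ => (Complex.Gamma w)⁻¹) z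

lemma hasDeriv_R (z : ℂ) : HasDerivAt (fun w : ℂ => (Complex.Gamma w)⁻¹) (dR z) z :=
  (Complex.differentiable_one_div_Gamma z).hasDerivAt

lemma R_rec (z : ℂ) : (Complex.Gamma z)⁻¹ = z * (Complex.Gamma (z + 1))⁻¹ :=
  Complex.one_div_Gamma_eq_self_mul_one_div_Gamma_add_one z

lemma dR_rec (z : ℂ) : dR z = (Complex.Gamma (z + 1))⁻¹ + z * dR (z + 1) := by
  have h1 := hasDeriv_R z
  have h2 : HasDerivAt (fun w : ℂ => w * (Complex.Gamma (w + 1))⁻¹)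
    (1 * (Complex.Gamma (z + 1))⁻¹ + z * dR (z + 1)) z :=
    (hasDerivAt_id z).mul (HasDerivAt.comp_add_const z 1 (hasDeriv_R (z + 1)))
  have h3 := h1.unique (h2.congr_of_eventuallyEq (Eventually.of_forall R_rec))
  rw [h3, one_mul]

lemma R_refl (z : ℂ) : (Complex.Gamma z)⁻¹ * (Complex.Gamma (1 - z))⁻¹ =
    Complex.sin (π * z) / π := by
  rw [← mul_inv, Complex.Gamma_mul_Gamma_one_sub, inv_div]

lemma dR_refl (z : ℂ) : dR z * (Complex.Gamma (1 - z))⁻¹ - (Complex.Gamma z)⁻¹ * dR (1 - z)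
    = Complex.cos (π * z) := by
  have h1 := (hasDeriv_R z).mul (HasDerivAt.comp_const_sub 1 z (hasDeriv_R (1 - z)))
  have h2 : HasDerivAt (fun w : ℂ => Complex.sin (π * w) / π)
      (Complex.cos (π * z) * (π * 1) / π) z :=
    (((hasDerivAt_id z).const_mul (π : ℂ)).csin).div_const _
  have h3 := h1.unique (h2.congr_of_eventuallyEq (Eventually.of_forall R_refl))
  have hpi : (π : ℂ) ≠ 0 := by exact_mod_cast Real.pi_ne_zero
  rw [mul_one, mul_div_cancel_right₀ _ hpi] at h3
  rw [← h3]; ring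

lemma J_one (β : ℝ) (hβ : -1 < β) (hβ1 : β < 1) (hs : Real.sin (π * β) ≠ 0) :
    Jint β (-β) 1 = π * β * Real.cos (π * β) / Real.sin (π * β) - 1 := by
  have hEq := mellin_fcut_eq β (-β) hβ (by linarith) (by linarith)
  have hmem : (-1 : ℂ) ∈ {z : ℂ | -2 < z.re} := by norm_num
  have hopen : IsOpen {z : ℂ | -2 < z.re} := isOpen_lt continuous_const Complex.continuous_re
  have d1 := (mellin_fcut_diff β (-β) hβ (by linarith) (by linarith) (-1) hmem).hasDerivAt.mul
    (hasDeriv_R (-1))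
  have sh (c : ℂ) : HasDerivAt (fun z : ℂ => (Complex.Gamma (c + z))⁻¹) (dR (c + -1)) (-1) :=
    HasDerivAt.comp_const_add c (-1) (hasDeriv_R (c + -1))
  have d2 : HasDerivAt (Egam β (-β)) _ (-1) := (((sh 1).sub
    ((sh (β + 1)).const_mul (Complex.Gamma (β + 1)))).sub
    ((sh ((-β : ℝ) + 1)).const_mul (Complex.Gamma ((-β : ℝ) + 1)))).add
    ((sh ((β + -β : ℝ) + 1)).const_mul (Complex.Gamma ((β + -β : ℝ) + 1)))
  have h := d1.unique (d2.congr_of_eventuallyEq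
    (Filter.eventuallyEq_of_mem (hopen.mem_nhds hmem) hEq))
  have r0 : dR 0 = 1 := by rw [dR_rec]; simp
  have rm1 : dR (-1) = -1 := by rw [dR_rec]; simp [r0]
  have g1 : Complex.Gamma (-1) = 0 := by
    have := Complex.Gamma_neg_nat_eq_zero 1
    simpa using this
  have hJ := mellin_real β (-β) 1
  push_cast at hJ
  have a1 : (β : ℂ) + 1 + -1 = β := by ring
  have a2 : -(β : ℂ) + 1 + -1 = -β := by ring
  have a3 : -(β : ℂ) + 1 = 1 - β := by ring
  have a4 : (1 : ℂ) + -1 = 0 := by ring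
  push_cast at h
  rw [g1, rm1, hJ, a1, a2, a3, add_neg_cancel (β : ℂ), zero_add, a4, r0, dR_rec (-β), a3] at h
  have hr := dR_refl β
  rw [R_rec β] at hr
  have hG := R_refl β
  rw [R_rec β] at hG
  have n1 : Complex.Gamma (β + 1) ≠ 0 := Complex.Gamma_ne_zero_of_re_pos (by simp; linarith)
  have n2 : Complex.Gamma (1 - β) ≠ 0 := Complex.Gamma_ne_zero_of_re_pos (by simp; linarith)
  have n3 : Complex.sin (π * β) ≠ 0 := by exact_mod_cast hs
  have hpi : (π : ℂ) ≠ 0 := by exact_mod_cast Real.pi_ne_zero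
  have : ((Jint β (-β) 1 : ℝ) : ℂ) = π * β * Complex.cos (π * β) / Complex.sin (π * β) - 1 := by
    simp only [inv_zero, mul_zero, zero_add, Complex.Gamma_one, mul_one] at h
    have hG2 : (π : ℂ) * β / Complex.sin (π * β) =
        Complex.Gamma (β + 1) * Complex.Gamma (1 - β) := by
      clear h hr
      generalize Complex.sin (π * β) = S at *
      generalize Complex.Gamma (β + 1) = A at *
      generalize Complex.Gamma (1 - β) = B at *
      field_simp at hG ⊢
      linear_combination hG
    have : (π : ℂ) * β * Complex.cos (π * β) / Complex.sin (π * β) =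
        (π * β / Complex.sin (π * β)) * Complex.cos (π * β) := by ring
    rw [this, hG2, ← hr]
    have k1 : Complex.Gamma (β + 1) * (Complex.Gamma (β + 1))⁻¹ = 1 := mul_inv_cancel₀ n1
    have k2 : Complex.Gamma (1 - β) * (Complex.Gamma (1 - β))⁻¹ = 1 := mul_inv_cancel₀ n2
    linear_combination -h - (Complex.Gamma (β + 1) * dR β) * k2 
      + β * dR (1 - β) * Complex.Gamma (1 - β) * k1 + k2
  exact_mod_cast this

lemma c1s_half : c1s (1/2) = 1 / π := by
  rw [c1s]
  have h4 : (4:ℝ) ^ (1/2 : ℝ) = 2 := by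
    rw [← Real.sqrt_eq_rpow, show (4:ℝ) = 2 ^ 2 by norm_num, Real.sqrt_sq (by norm_num)]
  rw [h4, ← Real.sqrt_eq_rpow, show (1:ℝ) - 1/2 = 1/2 by norm_num, Real.Gamma_one_half_eq,
    Real.mul_self_sqrt Real.pi_pos.le]
  norm_num

lemma c1s_ne_half (s : ℝ) (hs0 : 0 < s) (hs1 : s < 1) (hs : s ≠ 1/2) :
    c1s s * (Real.Gamma (1 - 2 * s) * Real.cos (π * s)) = s := by
  have h1 := Real.Gamma_mul_Gamma_add_half (1/2 - s)
  have h2 := Real.Gamma_mul_Gamma_one_sub (1/2 + s)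
  rw [show 1/2 - s + 1/2 = 1 - s by ring, show 2 * (1/2 - s) = 1 - 2 * s by ring,
    show 1 - (1 - 2 * s) = 2 * s by ring, Real.rpow_mul (by norm_num)] at h1
  norm_num at h1
  rw [show 1 - (1/2 + s) = 1/2 - s by ring, show π * (1/2 + s) = π * s + π / 2 by ring,
    Real.sin_add_pi_div_two] at h2
  have hc : Real.cos (π * s) ≠ 0 := by
    intro h
    rcases lt_or_gt_of_ne hs with h' | h'
    · have := Real.cos_pos_of_mem_Ioo (x := π * s) ⟨by nlinarith [Real.pi_pos], by
        nlinarith [Real.pi_pos]⟩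
      linarith
    · have := Real.cos_neg_of_pi_div_two_lt_of_lt (x := π * s) (by nlinarith [Real.pi_pos])
        (by nlinarith [Real.pi_pos])
      linarith
  have hg1 : Real.Gamma (1 - s) ≠ 0 := (Real.Gamma_pos_of_pos (by linarith)).ne'
  have hpi : √π ≠ 0 := (Real.sqrt_pos.2 Real.pi_pos).ne'
  have hpi2 : √π * √π = π := Real.mul_self_sqrt Real.pi_pos.le
  have hg2 : Real.Gamma (1/2 + s) ≠ 0 := (Real.Gamma_pos_of_pos (by linarith)).ne'
  rw [c1s, ← Real.sqrt_eq_rpow]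
  rw [eq_div_iff hc] at h2
  have hm : Real.Gamma (1/2 + s) * Real.cos (π * s) *
    (Real.Gamma (1 - 2 * s) * 4 ^ s) = √π * Real.Gamma (1 - s) := by
    apply mul_right_cancel₀ hpi
    linear_combination (-(Real.Gamma (1/2 + s) * Real.cos (π * s))) * h1
      + Real.Gamma (1 - s) * h2 - Real.Gamma (1 - s) * hpi2
  rw [div_mul_eq_mul_div, div_eq_iff (mul_ne_zero hpi hg1)]
  linear_combination s * hm

lemma final_alg (s β : ℝ) (hs0 : 0 < s) (hs1 : s < 1) (hβ1 : -1 < β) (hβ2 : β < 2*s)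
    (h2 : ∀ k : ℤ, β - 2*s ≠ (k : ℝ)) :
    c1s s * (1 / (2 * s) + Jint β (2 * s - 1 - β) (2 * s))
        = Real.Gamma (β+1) / Real.Gamma (β - 2*s + 1)
            * (Real.sin (π*(β-s)) / Real.sin (π*(β-2*s))) := by
  have hsin : Real.sin (π * (β - 2 * s)) ≠ 0 := by
    intro h
    rw [Real.sin_eq_zero_iff] at h
    obtain ⟨n, hn⟩ := h
    apply h2 n
    apply mul_left_cancel₀ Real.pi_ne_zero
    linarith
  by_cases hs : s = 1/2
  · subst hs
    have e1 : π * (β - 2 * (1/2)) = π * β - π := by ring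
    have e2 : π * (β - 1/2) = π * β - π/2 := by ring
    rw [e1, Real.sin_sub_pi] at hsin
    have hb : β ≠ 0 := by rintro rfl; simp at hsin
    rw [e1, e2, Real.sin_sub_pi, Real.sin_sub_pi_div_two, c1s_half,
      show 2 * (1/2 : ℝ) - 1 - β = -β by ring, show 2 * (1/2 : ℝ) = 1 by norm_num,
      J_one β hβ1 (by linarith) (by simpa using hsin), show β - 1 + 1 = β by ring,
      Real.Gamma_add_one hb]
    have hG : Real.Gamma β ≠ 0 := by
      intro h
      have h' := Real.Gamma_mul_Gamma_one_sub β
      rw [h, zero_mul, eq_comm, div_eq_zero_iff] at h'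
      rcases h' with h' | h'
      · exact Real.pi_ne_zero h'
      · exact hsin (by simp [h'])
    have hsin' : Real.sin (π * β) ≠ 0 := by simpa using hsin
    have := Real.pi_ne_zero
    field_simp
    ring
  · have hJ := real_eq β (2 * s - 1 - β) (2 * s) hβ1 (by linarith) (by linarith) (by linarith)
      (by ring)
    have hc := c1s_ne_half s hs0 hs1 hs
    have hcg : Real.Gamma (1 - 2 * s) * Real.cos (π * s) ≠ 0 := by
      intro h; rw [h, mul_zero] at hc; linarith
    have hG1 : Real.Gamma (1 - 2 * s) ≠ 0 := left_ne_zero_of_mul hcg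
    have hcos : Real.cos (π * s) ≠ 0 := right_ne_zero_of_mul hcg
    have hrec := Real.Gamma_add_one (s := -(2 * s)) (by linarith)
    rw [show -(2 * s) + 1 = 1 - 2 * s by ring] at hrec
    have hGm : Real.Gamma (-(2 * s)) ≠ 0 := by
      intro h; rw [h, mul_zero] at hrec; exact hG1 hrec
    have q1 := Real.Gamma_mul_Gamma_one_sub (2 * s - β)
    rw [show 1 - (2 * s - β) = β - 2 * s + 1 by ring,
      show π * (2 * s - β) = -(π * (β - 2 * s)) by ring, Real.sin_neg] at q1
    have q2 := congrArg (·⁻¹) (Real.Gamma_mul_Gamma_one_sub (-β))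
    simp only [sub_neg_eq_add, mul_inv, inv_div, mul_neg, Real.sin_neg] at q2
    have hGb : Real.Gamma (1 + β) ≠ 0 := (Real.Gamma_pos_of_pos (by linarith)).ne'
    have hpi := Real.pi_ne_zero
    have hGx : Real.Gamma (β - 2 * s + 1) ≠ 0 := by
      intro h
      rw [h, mul_zero, eq_comm, div_eq_zero_iff] at q1
      rcases q1 with h' | h'
      · exact hpi h'
      · exact hsin (by simpa using h')
    rw [show β + 1 - 2 * s = β - 2 * s + 1 by ring] at hJ
    have q2' : (Real.Gamma (-β))⁻¹ = - Real.sin (π * β) / π * Real.Gamma (1 + β) := by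
      rw [← q2]; field_simp
    have q1' : Real.Gamma (2 * s - β) = π / -Real.sin (π * (β - 2 * s)) *
        (Real.Gamma (β - 2 * s + 1))⁻¹ := by
      rw [← q1]; field_simp
    rw [q2', q1', add_comm 1 β] at hJ
    have hcs : c1s s = s / (Real.Gamma (1 - 2 * s) * Real.cos (π * s)) := by
      rw [eq_div_iff hcg, hc]
    have tr : Real.sin (π * (β - 2 * s)) + Real.sin (π * β) =
        2 * Real.sin (π * (β - s)) * Real.cos (π * s) := by
      rw [show π * (β - 2 * s) = π * (β - s) - π * s by ring,
        show π * β = π * (β - s) + π * s by ring, Real.sin_sub, Real.sin_add]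
      ring
    rw [← div_eq_mul_inv, div_eq_iff hGm] at hJ
    rw [hJ, hcs, hrec]
    clear hJ hcs hrec q1' q2' hGb q1 q2 hc
    generalize Real.sin (π * β) = S1 at *
    generalize Real.sin (π * (β - 2 * s)) = S2 at *
    generalize Real.sin (π * (β - s)) = S3 at *
    generalize Real.cos (π * s) = C at *
    generalize Real.Gamma (-(2 * s)) = G1 at *
    generalize Real.Gamma (β - 2 * s + 1) = G2 at *
    generalize Real.Gamma (β + 1) = G3 at *
    have hs00 := hs0.ne'
    field_simp
    rw [← sub_eq_zero] at tr ⊢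
    ring_nf at tr ⊢
    linear_combination 2 * s * G1 * G3 * tr
def gone (β a v : ℝ) : ℝ := (1 - (1 - v) ^ β) * v ^ (-a - 1)
def gtwo (β a v : ℝ) : ℝ := ((1 - v) ^ (a - 1) - (1 - v) ^ (a - 1 - β)) * v ^ (-a - 1)
def hker (β a y : ℝ) : ℝ := (1 - powPlus (1 + y) β) / |y| ^ (1 + a)

lemma ii_piece (p a δ : ℝ) (hp : -1 < p) (hδ : 0 < δ) (hδ1 : δ < 1) :
    IntervalIntegrable (fun v : ℝ => (1 - v) ^ p * v ^ (-a - 1)) volume δ 1 := by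
  apply IntervalIntegrable.mul_continuousOn
  · refine (ii_one_sub_rpow p hp).mono_set ?_
    rw [uIcc_of_le hδ1.le, uIcc_of_le zero_le_one]
    exact Icc_subset_Icc_left hδ.le
  · intro v hv
    rw [uIcc_of_le hδ1.le] at hv
    exact (Real.continuousAt_rpow_const _ _ (Or.inl (by linarith [hv.1]))).continuousWithinAt

lemma ii_gone (β a δ : ℝ) (hβ : -1 < β) (hδ : 0 < δ) (hδ1 : δ < 1) :
    IntervalIntegrable (gone β a) volume δ 1 := by
  have h := (ii_piece 0 a δ (by norm_num) hδ hδ1).sub (ii_piece β a δ hβ hδ hδ1)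
  refine h.congr (fun v _ => ?_)
  simp [gone]; ring

lemma ii_gtwo (β a δ : ℝ) (ha : 0 < a) (hβ : β < a) (hδ : 0 < δ) (hδ1 : δ < 1) :
    IntervalIntegrable (gtwo β a) volume δ 1 := by
  have h := (ii_piece (a - 1) a δ (by linarith) hδ hδ1).sub
    (ii_piece (a - 1 - β) a δ (by linarith) hδ hδ1)
  refine h.congr (fun v _ => ?_)
  simp [gtwo]; ring

lemma left_Ioo (β a ε : ℝ) (hε : 0 < ε) :
    EqOn (gone β a) (fun v => hker β a (-v)) (Ioo ε 1) := by
  intro v hv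
  have h0 : 0 < v := hε.trans hv.1
  have h1 : 0 < 1 + -v := by linarith [hv.2]
  simp only [gone, hker, powPlus, h1, if_true, abs_neg, abs_of_pos h0]
  rw [div_eq_mul_inv, ← Real.rpow_neg h0.le, ← sub_eq_add_neg]
  congr 2; ring

lemma left_Ioi (β a : ℝ) :
    EqOn (fun v : ℝ => v ^ (-a - 1)) (fun v => hker β a (-v)) (Ioi 1) := by
  intro v hv
  have hv' : 1 < v := hv
  have h0 : 0 < v := by linarith
  have h1 : ¬ 0 < 1 + -v := by linarith
  simp only [hker, powPlus, h1, if_false, abs_neg, abs_of_pos h0]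
  rw [sub_zero, one_div, ← Real.rpow_neg h0.le]
  congr 1; ring

lemma left_int (β a ε : ℝ) (ha : 0 < a) (hβ : -1 < β) (hε : 0 < ε) (hε1 : ε < 1) :
    IntegrableOn (hker β a) (Iic (-ε)) ∧
    ∫ y in Iic (-ε), hker β a y = 1 / a + ∫ v in ε..1, gone β a v := by
  have i1 : IntegrableOn (fun v => hker β a (-v)) (Ioc ε 1) := by
    rw [integrableOn_Ioc_iff_integrableOn_Ioo,
      ← integrableOn_congr_fun (left_Ioo β a ε hε) measurableSet_Ioo,
      ← integrableOn_Ioc_iff_integrableOn_Ioo,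
      ← intervalIntegrable_iff_integrableOn_Ioc_of_le hε1.le]
    exact ii_gone β a ε hβ hε hε1
  have i2 : IntegrableOn (fun v => hker β a (-v)) (Ioi 1) := by
    rw [← integrableOn_congr_fun (left_Ioi β a) measurableSet_Ioi]
    exact integrableOn_Ioi_rpow_of_lt (by linarith) one_pos
  have hu : Ioc ε 1 ∪ Ioi 1 = Ioi ε := Ioc_union_Ioi_eq_Ioi hε1.le
  have i3 : IntegrableOn (fun v => hker β a (-v)) (Ioi ε) := by
    rw [← hu]; exact i1.union i2
  constructor
  · have := i3.comp_neg
    simpa [integrableOn_Iic_iff_integrableOn_Iio] using this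
  · rw [← integral_comp_neg_Ioi, ← hu, setIntegral_union (Ioc_disjoint_Ioi le_rfl) measurableSet_Ioi i1 i2,
      integral_Ioc_eq_integral_Ioo, ← setIntegral_congr_fun measurableSet_Ioo (left_Ioo β a ε hε),
      ← setIntegral_congr_fun measurableSet_Ioi (left_Ioi β a),
      integral_Ioi_rpow_of_lt (by linarith) one_pos, intervalIntegral.integral_of_le hε1.le,
      integral_Ioc_eq_integral_Ioo, add_comm, Real.one_rpow]
    congr 1
    rw [sub_add_cancel, div_neg, neg_div, neg_neg]

lemma phi_image (ε : ℝ) (hε : 0 < ε) :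
    (fun v : ℝ => v / (1 - v)) '' (Ioo (ε / (1 + ε)) 1) = Ioi ε := by
  ext y
  constructor
  · rintro ⟨v, hv, rfl⟩
    have h1 : 0 < 1 - v := by linarith [hv.2]
    have h2 := hv.1
    rw [div_lt_iff₀ (by linarith)] at h2
    show ε < v / (1 - v)
    rw [lt_div_iff₀ h1]; linarith
  · intro hy
    have hy' : ε < y := hy
    have : 0 < 1 + y := by linarith
    refine ⟨y / (1 + y), ⟨?_, ?_⟩, ?_⟩
    · rw [div_lt_div_iff₀ (by linarith) this]; linarith
    · rw [div_lt_one this]; linarith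
    · have : 1 - y / (1 + y) = 1 / (1 + y) := by field_simp; ring
      simp only [this]; field_simp

lemma right_eq (β a δ : ℝ) (hδ : 0 < δ) :
    EqOn (gtwo β a) (fun v => |1 / (1 - v) ^ 2| • hker β a (v / (1 - v))) (Ioo δ 1) := by
  intro v hv
  have h0 : 0 < v := hδ.trans hv.1
  have h1 : 0 < 1 - v := by linarith [hv.2]
  have e1 : 1 + v / (1 - v) = (1 - v)⁻¹ := by field_simp; ring
  have h2 : 0 < (1 - v)⁻¹ := inv_pos.2 h1
  simp only [hker, e1, powPlus, h2, if_true, smul_eq_mul, gtwo]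
  rw [abs_of_pos (by positivity), abs_of_pos (by positivity), Real.inv_rpow h1.le,
    Real.div_rpow h0.le h1.le]
  generalize 1 - v = w at *
  rw [show -a - 1 = -(1 + a) by ring, Real.rpow_neg h0.le, Real.rpow_sub h1 (a - 1) β,
    show 1 + a = (a - 1) + 2 by ring, Real.rpow_add h1 (a - 1) 2]
  have p1 : 0 < w ^ (a - 1) := Real.rpow_pos_of_pos h1 _
  have p2 : 0 < v ^ (a - 1 + 2) := Real.rpow_pos_of_pos h0 _
  have p3 : 0 < w ^ β := Real.rpow_pos_of_pos h1 _
  have p4 : w ^ (2:ℝ) = w ^ 2 := by norm_cast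
  rw [p4]
  generalize w ^ (a - 1) = A at *
  generalize v ^ (a - 1 + 2) = B at *
  generalize w ^ β = D at *
  field_simp

lemma right_int (β a ε : ℝ) (ha : 0 < a) (hβ : β < a) (hε : 0 < ε) :
    IntegrableOn (hker β a) (Ioi ε) ∧
    ∫ y in Ioi ε, hker β a y = ∫ v in (ε / (1 + ε))..1, gtwo β a v := by
  have hδ : 0 < ε / (1 + ε) := by positivity
  have hδ1 : ε / (1 + ε) < 1 := by rw [div_lt_one (by linarith)]; linarith
  have hd : ∀ v ∈ Ioo (ε / (1 + ε)) 1, HasDerivWithinAt (fun v : ℝ => v / (1 - v))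
      (1 / (1 - v) ^ 2) (Ioo (ε / (1 + ε)) 1) v := by
    intro v hv
    have h1 : 1 - v ≠ 0 := by linarith [hv.2]
    have := (hasDerivAt_id v).div ((hasDerivAt_id v).const_sub 1) h1
    refine HasDerivAt.hasDerivWithinAt ?_
    refine HasDerivAt.congr_deriv (f := fun v : ℝ => v / (1 - v)) this ?_
    simp only [id]
    congr 1
    ring
  have hinj : InjOn (fun v : ℝ => v / (1 - v)) (Ioo (ε / (1 + ε)) 1) := by
    intro x hx y hy hxy
    have h1 : 1 - x ≠ 0 := by linarith [hx.2]
    have h2 : 1 - y ≠ 0 := by linarith [hy.2]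
    rw [div_eq_div_iff h1 h2] at hxy
    linarith
  constructor
  · rw [← phi_image ε hε, integrableOn_image_iff_integrableOn_abs_deriv_smul measurableSet_Ioo hd
      hinj, ← integrableOn_congr_fun (right_eq β a _ hδ) measurableSet_Ioo,
      ← integrableOn_Ioc_iff_integrableOn_Ioo,
      ← intervalIntegrable_iff_integrableOn_Ioc_of_le hδ1.le]
    exact ii_gtwo β a _ ha hβ hδ hδ1
  · rw [← phi_image ε hε, integral_image_eq_integral_abs_deriv_smul measurableSet_Ioo hd hinj,
      ← setIntegral_congr_fun measurableSet_Ioo (right_eq β a _ hδ),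
      intervalIntegral.integral_of_le hδ1.le, integral_Ioc_eq_integral_Ioo]

lemma gsum (β a v : ℝ) (hv : v < 1) :
    gone β a v + gtwo β a v = fnum β (a - 1 - β) v * v ^ (-a - 1) := by
  rw [fnum_eq _ _ _ hv, gone, gtwo, show β + (a - 1 - β) = a - 1 by ring]; ring

lemma total_int (β a ε : ℝ) (ha : 0 < a) (hβ : -1 < β) (hβa : β < a) (hε : 0 < ε) (hε1 : ε < 1) :
    ∫ y in {y : ℝ | ε < |y|}, hker β a y = 1 / a
      + (∫ v in ε..1, fnum β (a - 1 - β) v * v ^ (-a - 1))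
      + ∫ v in (ε / (1 + ε))..ε, gtwo β a v := by
  have hset : {y : ℝ | ε < |y|} = Iio (-ε) ∪ Ioi ε := by
    ext y
    simp only [mem_ofPred_eq, mem_union, mem_Iio, mem_Ioi, lt_abs]
    constructor
    · rintro (h | h)
      · right; exact h
      · left; linarith
    · rintro (h | h)
      · right; linarith
      · left; exact h
  obtain ⟨l1, l2⟩ := left_int β a ε ha hβ hε hε1
  obtain ⟨r1, r2⟩ := right_int β a ε ha hβa hε
  have hδ : 0 < ε / (1 + ε) := by positivity
  have hδ1 : ε / (1 + ε) < 1 := by rw [div_lt_one (by linarith)]; linarith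
  have hδε : ε / (1 + ε) ≤ ε := div_le_self hε.le (by linarith)
  rw [hset, setIntegral_union _ measurableSet_Ioi (l1.mono_set Iio_subset_Iic_self) r1,
    ← integral_Iic_eq_integral_Iio, l2, r2]
  · have i1 := ii_gtwo β a ε ha hβa hε hε1
    have i2 := ii_gtwo β a _ ha hβa hδ hδ1
    have i3 : IntervalIntegrable (gtwo β a) volume (ε / (1 + ε)) ε := i2.trans i1.symm
    rw [← intervalIntegral.integral_add_adjacent_intervals i3 i1]
    have : ∫ v in ε..1, fnum β (a - 1 - β) v * v ^ (-a - 1) =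
        ∫ v in ε..1, (gone β a v + gtwo β a v) := by
      rw [intervalIntegral.integral_of_le hε1.le, intervalIntegral.integral_of_le hε1.le,
        integral_Ioc_eq_integral_Ioo, integral_Ioc_eq_integral_Ioo]
      exact setIntegral_congr_fun measurableSet_Ioo (fun v hv => (gsum β a v hv.2).symm)
    rw [this, intervalIntegral.integral_add (ii_gone β a ε hβ hε hε1) i1]
    ring
  · rw [Set.disjoint_left]
    intro y hy hy'
    have : y < -ε := hy
    have : ε < y := hy'
    linarith

lemma main_tendsto (β a : ℝ) (ha : 0 < a) (ha2 : a < 2) (hβ : -1 < β) (hβa : β < a) :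
    Tendsto (fun ε : ℝ => ∫ v in ε..1, fnum β (a - 1 - β) v * v ^ (-a - 1)) (𝓝[>] 0)
      (𝓝 (Jint β (a - 1 - β) a)) := by
  have h := Jint_integrable β (a - 1 - β) a hβ (by linarith) (by linarith) ha2
  have hI : IntegrableOn (fun v : ℝ => fnum β (a - 1 - β) v * v ^ (-a - 1)) (uIcc 0 1) := by
    rw [uIcc_of_le zero_le_one, integrableOn_Icc_iff_integrableOn_Ioo]; exact h
  have hc := intervalIntegral.continuousOn_primitive_interval_left hI 0 (by simp)
  have hv : ∫ v in (0:ℝ)..1, fnum β (a - 1 - β) v * v ^ (-a - 1) = Jint β (a - 1 - β) a := by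
    rw [intervalIntegral.integral_of_le zero_le_one, integral_Ioc_eq_integral_Ioo, Jint]
  rw [ContinuousWithinAt, hv, uIcc_of_le zero_le_one] at hc
  refine hc.mono_left ?_
  rw [← nhdsWithin_Ioo_eq_nhdsGT (zero_lt_one' ℝ)]
  exact nhdsWithin_mono _ Ioo_subset_Icc_self

lemma err_tendsto (β a : ℝ) (ha : 0 < a) (ha2 : a < 2) :
    Tendsto (fun ε : ℝ => ∫ v in (ε / (1 + ε))..ε, gtwo β a v) (𝓝[>] 0) (𝓝 0) := by
  obtain ⟨C, hC0, hC⟩ := (one_sub_rpow_isBigO (a - 1) (a - 1 - β)).exists_pos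
  rw [isBigOWith_iff, Metric.eventually_nhds_iff] at hC
  obtain ⟨r, hr, hC⟩ := hC
  have hlim : Tendsto (fun ε : ℝ => C * 2 ^ a * ε ^ (2 - a)) (𝓝[>] 0) (𝓝 0) := by
    have h1 : ContinuousAt (fun ε : ℝ => C * 2 ^ a * ε ^ (2 - a)) 0 :=
      continuousAt_const.mul (Real.continuousAt_rpow_const _ _ (Or.inr (by linarith)))
    have h2 := h1.tendsto.mono_left (nhdsWithin_le_nhds (s := Ioi 0))
    rwa [Real.zero_rpow (by linarith), mul_zero] at h2
  refine squeeze_zero_norm' ?_ hlim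
  have hm : Ioo (0:ℝ) (min r 1) ∈ 𝓝[>] (0:ℝ) := Ioo_mem_nhdsGT (lt_min hr one_pos)
  filter_upwards [hm] with ε hε
  have hε0 := hε.1
  have hεr : ε < r := hε.2.trans_le (min_le_left _ _)
  have hε1 : ε < 1 := hε.2.trans_le (min_le_right _ _)
  have hδε : ε / (1 + ε) ≤ ε := div_le_self hε0.le (by linarith)
  have hδ2 : ε / 2 ≤ ε / (1 + ε) := by gcongr; linarith
  have hb : ∀ v ∈ uIoc (ε / (1 + ε)) ε, ‖gtwo β a v‖ ≤ C * (ε / 2) ^ (-a) := by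
    intro v hv
    rw [uIoc_of_le hδε] at hv
    have hv0 : 0 < v := lt_of_le_of_lt (by positivity) hv.1
    have h1 := hC (y := v) (by simp [abs_of_pos hv0]; linarith [hv.2])
    rw [gtwo, norm_mul, Real.norm_of_nonneg (Real.rpow_nonneg hv0.le _)]
    rw [Real.norm_of_nonneg hv0.le] at h1
    calc _ ≤ C * v * v ^ (-a - 1) := by gcongr
      _ = C * v ^ (-a) := by
        rw [Real.rpow_sub_one hv0.ne']; field_simp
      _ ≤ _ := by
        gcongr C * ?_
        exact Real.rpow_le_rpow_of_nonpos (by linarith) (by linarith [hv.1]) (by linarith)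
  refine (intervalIntegral.norm_integral_le_of_norm_le_const hb).trans ?_
  have h3 : |ε - ε / (1 + ε)| ≤ ε ^ 2 := by
    rw [abs_of_nonneg (by linarith), show ε - ε / (1 + ε) = ε ^ 2 / (1 + ε) by field_simp; ring]
    exact div_le_self (by positivity) (by linarith)
  calc _ ≤ C * (ε / 2) ^ (-a) * ε ^ 2 := by gcongr
    _ = _ := by
      rw [Real.div_rpow hε0.le (by norm_num), Real.rpow_neg hε0.le, Real.rpow_neg (by norm_num),
        Real.rpow_sub hε0]
      norm_num
      field_simp

end Aux
/-- **Lemma 2.4, fractional Laplacian of powers.**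
For `s ∈ (0,1)` and `β ∈ (-1,2s)` with `β-s, β-2s ∉ ℤ`, the principal value
`p.v.∫_ℝ (1 - ((1+y)₊)^β)/|y|^{1+2s} dy` exists and
`c_{1,s} · p.v.∫ = Γ(β+1)/Γ(β-2s+1) · sin(π(β-s))/sin(π(β-2s))`, i.e. the one-dimensional
fractional Laplacian of `x ↦ (x₊)^β` at `x = 1` equals this constant. -/
theorem frac_laplacian_of_powers
    (s β : ℝ) (hs0 : 0 < s) (hs1 : s < 1) (hβ1 : -1 < β) (hβ2 : β < 2*s)
    (h1 : ∀ k : ℤ, β - s ≠ (k : ℝ)) (h2 : ∀ k : ℤ, β - 2*s ≠ (k : ℝ)) :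
    ∃ L : ℝ,
      Tendsto (fun ε : ℝ =>
          ∫ y in {y : ℝ | ε < |y|}, (1 - powPlus (1+y) β) / |y| ^ (1 + 2*s))
        (nhdsWithin 0 (Set.Ioi 0)) (nhds L) ∧
      c1s s * L
        = Real.Gamma (β+1) / Real.Gamma (β - 2*s + 1)
            * (Real.sin (π*(β-s)) / Real.sin (π*(β-2*s))) := by
  refine ⟨1 / (2 * s) + Jint β (2 * s - 1 - β) (2 * s), ?_,
    final_alg s β hs0 hs1 hβ1 hβ2 h2⟩
  have hm := main_tendsto β (2 * s) (by linarith) (by linarith) hβ1 hβ2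
  have he := err_tendsto β (2 * s) (by linarith) (by linarith)
  have ht := (hm.const_add (1 / (2 * s))).add he
  rw [add_zero] at ht
  refine ht.congr' ?_
  have hmem : Ioo (0:ℝ) 1 ∈ nhdsWithin (0:ℝ) (Ioi 0) := Ioo_mem_nhdsGT one_pos
  filter_upwards [hmem] with ε hε
  exact (total_int β (2 * s) ε (by linarith) hβ1 hβ2 hε.1 hε.2).symm
end
end

section
/- Let s ∈ (0,1) and β ∈ (0,2s) with β−s ∉ ℤ and β−2s ∉ ℤ. Then the principal value p.v.∫₀^∞ (1 − y^β)/|1−y|^{1+2s} dy (i.e., the regional fractional Laplacian of x ↦ x^β on ℝ₊, evaluated at x = 1, divided by c_{1,s}) equals 0 if and only if β satisfies equation (E): Γ(β+1)·Γ(2s−β)·sin(π(β−s)) = −Γ(2s)·sin(πs), equivalently Γ(β+1)/(Γ(β−2s+1)Γ(2s)) = sin(π(β−2s))·sin(πs)/(π·sin(π(β−s))). -/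
open MeasureTheory Real Set Filter

noncomputable section

open scoped Topology

/-- Incomplete beta integral. -/
def hB (p t x : ℝ) : ℝ := ∫ y in (0:ℝ)..x, y ^ (p - 1) * (1 - y) ^ (t - 1)

lemma cont_one_sub_rpow (r a b : ℝ) (ha : a < 1) (hb : b < 1) :
    ContinuousOn (fun y : ℝ => (1 - y) ^ r) (uIcc a b) := by
  apply ContinuousOn.rpow_const (by fun_prop)
  intro y hy
  left
  have : y ≤ max a b := hy.2
  have : max a b < 1 := max_lt ha hb
  linarith

lemma int_hB (p t a b : ℝ) (hp : 0 < p) (ha : a < 1) (hb : b < 1) :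
    IntervalIntegrable (fun y : ℝ => y ^ (p - 1) * (1 - y) ^ (t - 1)) volume a b :=
  (intervalIntegral.intervalIntegrable_rpow' (by linarith)).mul_continuousOn
    (cont_one_sub_rpow _ _ _ ha hb)

lemma hB_rec (p t x : ℝ) (hp : 0 < p) (hx0 : 0 ≤ x) (hx : x < 1) :
    t * hB p t x = (p + t) * hB p (t + 1) x - x ^ p * (1 - x) ^ t := by
  have h1 := int_hB p t 0 x hp one_pos hx
  have h2 := int_hB p (t + 1) 0 x hp one_pos hx
  have key : ∫ y in (0:ℝ)..x, ((p + t) * (y ^ (p - 1) * (1 - y) ^ (t + 1 - 1))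
      - t * (y ^ (p - 1) * (1 - y) ^ (t - 1))) = x ^ p * (1 - x) ^ t - 0 ^ p * (1 - 0) ^ t := by
    apply intervalIntegral.integral_eq_sub_of_hasDerivAt_of_le hx0
      (f := fun y => y ^ p * (1 - y) ^ t)
    · apply ContinuousOn.mul
      · exact (continuous_id.rpow_const (fun _ => Or.inr hp.le)).continuousOn
      · rw [← uIcc_of_le hx0]
        exact cont_one_sub_rpow _ _ _ one_pos hx
    · intro y hy
      have hy0 : 0 < y := hy.1
      have hy1 : 0 < 1 - y := by linarith [hy.2]
      have d1 : HasDerivAt (fun y : ℝ => y ^ p) (p * y ^ (p - 1)) y :=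
        Real.hasDerivAt_rpow_const (Or.inl hy0.ne')
      have d2 : HasDerivAt (fun y : ℝ => (1 - y) ^ t) (-1 * t * (1 - y) ^ (t - 1)) y :=
        ((hasDerivAt_id y).const_sub 1).rpow_const (Or.inl hy1.ne')
      refine (d1.mul d2).congr_deriv ?_
      have e1 : y ^ p = y ^ (p - 1) * y := by
        rw [← Real.rpow_add_one hy0.ne']; congr 1; ring
      have e2 : (1 - y) ^ t = (1 - y) ^ (t - 1) * (1 - y) := by
        rw [← Real.rpow_add_one hy1.ne']; congr 1; ring
      rw [add_sub_cancel_right, e1, e2]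
      ring
    · exact (h2.const_mul _).sub (h1.const_mul _)
  rw [intervalIntegral.integral_sub (h2.const_mul _) (h1.const_mul _),
    intervalIntegral.integral_const_mul, intervalIntegral.integral_const_mul,
    Real.zero_rpow hp.ne'] at key
  unfold hB
  linarith

lemma beta_cast (p t y : ℝ) (hy : y ∈ uIcc (0:ℝ) 1) :
    ((y : ℂ) ^ ((p : ℂ) - 1) * (1 - (y : ℂ)) ^ ((t : ℂ) - 1)) =
      ((y ^ (p - 1) * (1 - y) ^ (t - 1) : ℝ) : ℂ) := by
  rw [uIcc_of_le zero_le_one] at hy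
  rw [Complex.ofReal_mul, Complex.ofReal_cpow hy.1, Complex.ofReal_cpow (by linarith [hy.2])]
  push_cast
  rfl

lemma int_hB_one (p t : ℝ) (hp : 0 < p) (ht : 0 < t) :
    IntervalIntegrable (fun y : ℝ => y ^ (p - 1) * (1 - y) ^ (t - 1)) volume 0 1 := by
  have h := Complex.betaIntegral_convergent (u := p) (v := t) (by simpa) (by simpa)
  have h' := (intervalIntegrable_congr (fun y hy => beta_cast p t y (uIoc_subset_uIcc hy))).1 h
  have h3 := h'.1.re
  rw [intervalIntegrable_iff_integrableOn_Ioc_of_le zero_le_one]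
  simpa [IntegrableOn] using h3

lemma hB_one (p t : ℝ) (hp : 0 < p) (ht : 0 < t) :
    hB p t 1 = Real.Gamma p * Real.Gamma t / Real.Gamma (p + t) := by
  have h := Complex.betaIntegral_eq_Gamma_mul_div p t (by simpa) (by simpa)
  unfold Complex.betaIntegral at h
  rw [intervalIntegral.integral_congr (fun y hy => beta_cast p t y hy),
    intervalIntegral.integral_ofReal, ← Complex.ofReal_add, Complex.Gamma_ofReal,
    Complex.Gamma_ofReal, Complex.Gamma_ofReal] at h
  unfold hB
  exact_mod_cast h

lemma tendsto_prim (f : ℝ → ℝ) (hf : IntervalIntegrable f volume 0 1) :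
    Tendsto (fun x => ∫ y in (0:ℝ)..x, f y) (𝓝[<] 1) (𝓝 (∫ y in (0:ℝ)..1, f y)) := by
  have h := intervalIntegral.continuousOn_primitive_interval' hf (left_mem_uIcc)
  rw [uIcc_of_le zero_le_one] at h
  have := h 1 (by simp)
  refine this.mono_left ?_
  rw [← nhdsWithin_Ioo_eq_nhdsLT (zero_lt_one : (0:ℝ) < 1)]
  exact nhdsWithin_mono _ Ioo_subset_Icc_self

lemma tendsto_hB (p t : ℝ) (hp : 0 < p) (ht : 0 < t) :
    Tendsto (fun x => hB p t x) (𝓝[<] 1)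
      (𝓝 (Real.Gamma p * Real.Gamma t / Real.Gamma (p + t))) := by
  rw [← hB_one p t hp ht]
  exact tendsto_prim _ (int_hB_one p t hp ht)

lemma tendsto_quot (f : ℝ → ℝ) (hf : DifferentiableAt ℝ f 1) (h0 : f 1 = 0) :
    Tendsto (fun x => f x / (1 - x)) (𝓝[<] 1) (𝓝 (-deriv f 1)) := by
  have h := (hasDerivAt_iff_tendsto_slope_left_right.1 hf.hasDerivAt).1.neg
  refine h.congr (fun x => ?_)
  rw [slope_def_field, h0, sub_zero, ← div_neg, neg_sub]

lemma tendsto_one_sub_rpow (r : ℝ) (hr : 0 < r) :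
    Tendsto (fun x : ℝ => (1 - x) ^ r) (𝓝[<] 1) (𝓝 0) := by
  have : ContinuousAt (fun x : ℝ => (1 - x) ^ r) 1 := by
    apply ContinuousAt.rpow_const (by fun_prop) (Or.inr hr.le)
  have h := this.tendsto
  simp only [sub_self, Real.zero_rpow hr.ne'] at h
  exact h.mono_left nhdsWithin_le_nhds

lemma tendsto_bd1 (f : ℝ → ℝ) (hf : DifferentiableAt ℝ f 1) (h0 : f 1 = 0) (r : ℝ)
    (hr : -1 < r) :
    Tendsto (fun x => f x * (1 - x) ^ r) (𝓝[<] 1) (𝓝 0) := by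
  have h := (tendsto_quot f hf h0).mul (tendsto_one_sub_rpow (r + 1) (by linarith))
  rw [mul_zero] at h
  refine h.congr' ?_
  filter_upwards [self_mem_nhdsWithin] with x hx
  have hx' : 0 < 1 - x := by linarith [mem_Iio.1 hx]
  rw [Real.rpow_add_one hx'.ne']
  field_simp

lemma tendsto_bd2 (f g : ℝ → ℝ) (hf : DifferentiableAt ℝ f 1) (h0 : f 1 = 0)
    (hg : DifferentiableAt ℝ g 1) (hg0 : g 1 = 0) (r : ℝ)
    (hr : -2 < r) :
    Tendsto (fun x => f x * g x * (1 - x) ^ r) (𝓝[<] 1) (𝓝 0) := by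
  have h := (tendsto_quot f hf h0).mul (tendsto_bd1 g hg hg0 (r + 1) (by linarith))
  rw [mul_zero] at h
  refine h.congr' ?_
  filter_upwards [self_mem_nhdsWithin] with x hx
  have hx' : 0 < 1 - x := by linarith [mem_Iio.1 hx]
  rw [Real.rpow_add_one hx'.ne']
  field_simp

lemma dpow (p : ℝ) : DifferentiableAt ℝ (fun x : ℝ => x ^ p) 1 :=
  (Real.hasDerivAt_rpow_const (Or.inl one_ne_zero)).differentiableAt

def SB (s β x : ℝ) : ℝ :=
  hB 1 (-(2*s)) x - hB (β+1) (-(2*s)) x + hB (2*s) (-(2*s)) x - hB (2*s-β) (-(2*s)) x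

lemma tendsto_bdA (s β : ℝ) (hs1 : s < 1) :
    Tendsto (fun x : ℝ => (x ^ (1:ℝ) - x ^ (β+1) + x ^ (2*s) - x ^ (2*s-β)) * (1 - x) ^ (-(2*s)))
      (𝓝[<] 1) (𝓝 0) := by
  have h := tendsto_bd2 (fun x => 1 - x ^ β) (fun x => x ^ (1:ℝ) - x ^ (2*s-β))
    ((differentiableAt_const _).sub (dpow _)) (by simp) ((dpow _).sub (dpow _)) (by simp)
    (-(2*s)) (by linarith)
  refine h.congr' ?_
  filter_upwards [Ioo_mem_nhdsLT (zero_lt_one : (0:ℝ) < 1)] with x hx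
  have e1 : x ^ (β + 1) = x ^ β * x ^ (1:ℝ) := Real.rpow_add hx.1 _ _
  have e2 : x ^ (2*s) = x ^ β * x ^ (2*s-β) := by rw [← Real.rpow_add hx.1]; congr 1; ring
  rw [e1, e2]
  ring

lemma lim_ne (s β : ℝ) (hs0 : 0 < s) (hs1 : s < 1) (hβ0 : 0 < β) (hβ2 : β < 2*s) :
    Tendsto (fun x => (-(2*s)) * (1 - 2*s) * SB s β x) (𝓝[<] 1)
      (𝓝 ((1-2*s)*(2-2*s)*(Gamma 1 * Gamma (2-2*s) / Gamma (1 + (2-2*s)))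
        - (β+1-2*s)*(β+2-2*s)*(Gamma (β+1) * Gamma (2-2*s) / Gamma (β+1 + (2-2*s)))
        + β*(1-β)*(Gamma (2*s-β) * Gamma (2-2*s) / Gamma (2*s-β + (2-2*s))))) := by
  have ht : 0 < 2-2*s := by linarith
  have t1 := (tendsto_hB 1 (2-2*s) one_pos ht).const_mul ((1-2*s)*(2-2*s))
  have t2 := (tendsto_hB (β+1) (2-2*s) (by linarith) ht).const_mul ((β+1-2*s)*(β+2-2*s))
  have t4 := (tendsto_hB (2*s-β) (2-2*s) (by linarith) ht).const_mul (β*(1-β))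
  have b1 := (tendsto_bdA s β hs1).const_mul (1-2*s)
  have b2 := tendsto_bd1 (fun x => (1-2*s)*x^(1:ℝ) - (β+1-2*s)*x^(β+1) + β*x^(2*s-β))
    ((((dpow _).const_mul _).sub ((dpow _).const_mul _)).add ((dpow _).const_mul _))
    (by simp only [Real.one_rpow]; ring) (1-2*s) (by linarith)
  have h := (((t1.sub t2).add t4).sub b1).sub b2
  rw [mul_zero, sub_zero, sub_zero] at h
  refine h.congr' ?_
  filter_upwards [Ioo_mem_nhdsLT (zero_lt_one : (0:ℝ) < 1)] with x hx
  have r (p : ℝ) (hp : 0 < p) := hB_rec p (-(2*s)) x hp hx.1.le hx.2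
  have r' (p : ℝ) (hp : 0 < p) := hB_rec p (-(2*s)+1) x hp hx.1.le hx.2
  have r1 := r 1 one_pos
  have r2 := r (β+1) (by linarith)
  have r3 := r (2*s) (by linarith)
  have r4 := r (2*s-β) (by linarith)
  have r1' := r' 1 one_pos
  have r2' := r' (β+1) (by linarith)
  have r4' := r' (2*s-β) (by linarith)
  have e : -(2*s)+1+1 = 2-2*s := by ring
  have e' : -(2*s)+1 = 1-2*s := by ring
  rw [e, e'] at r1' r2' r4'
  rw [e'] at r1 r2 r3 r4
  unfold SB
  linear_combination (-(1-2*s)) * (r1 - r2 + r3 - r4) - (1-2*s)*r1' + (β+1-2*s)*r2' -β*r4'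

lemma aux_gamma (β : ℝ) (hβ0 : 0 < β) (hβ2 : β < 2) :
    β*(1-β) / Gamma (2-β) = Gamma (β+1) * sin (π*β) / π := by
  rcases eq_or_ne β 1 with rfl | hne
  · simp
  · have h := Real.Gamma_mul_Gamma_one_sub β
    have hs : sin (π*β) ≠ 0 := by
      intro h0
      obtain ⟨n, hn⟩ := Real.sin_eq_zero_iff.1 h0
      have : (n:ℝ) = β := by
        have := pi_ne_zero
        field_simp at hn
        exact hn
      rw [← this] at hβ0 hβ2 hne
      norm_cast at *
      omega
    have h2 : Gamma (2-β) = (1-β) * Gamma (1-β) := by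
      rw [← Real.Gamma_add_one (sub_ne_zero.2 hne.symm)]; congr 1; ring
    have h3 : Gamma (1-β) ≠ 0 := by
      intro h0
      rw [h0, mul_zero] at h
      exact (div_ne_zero pi_ne_zero hs) h.symm
    have h4 : 1 - β ≠ 0 := sub_ne_zero.2 hne.symm
    rw [h2, Real.Gamma_add_one hβ0.ne']
    have := pi_ne_zero
    rw [eq_div_iff hs] at h
    generalize sin (π*β) = S at *
    rw [div_eq_div_iff (mul_ne_zero h4 h3) this]
    linear_combination (-β * (1-β)) * h

lemma aux_gamma2 (z : ℝ) (hz : ∀ k : ℤ, z ≠ k) :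
    z*(z+1) / Gamma (z+2) = Gamma (1-z) * sin (π*z) / π := by
  have h := Real.Gamma_mul_Gamma_one_sub z
  have hs : sin (π*z) ≠ 0 := by
    intro h0
    obtain ⟨n, hn⟩ := Real.sin_eq_zero_iff.1 h0
    have : (n:ℝ) = z := by
      have := pi_ne_zero
      field_simp at hn
      exact hn
    exact hz n this.symm
  have h0 : z ≠ 0 := by simpa using hz 0
  have h1 : z + 1 ≠ 0 := by
    have := hz (-1)
    contrapose! this
    push_cast; linarith
  have h2 : Gamma (z+2) = (z+1)*(z * Gamma z) := by
    rw [← Real.Gamma_add_one h0, ← Real.Gamma_add_one h1]; congr 1; ring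
  have h3 : Gamma z ≠ 0 := by
    intro h0
    rw [h0, zero_mul] at h
    exact (div_ne_zero pi_ne_zero hs) h.symm
  have := pi_ne_zero
  rw [h2]
  rw [eq_div_iff hs] at h
  rw [div_eq_div_iff (by positivity) this]
  linear_combination (-z * (z+1)) * h

lemma lim_ne' (s β : ℝ) (hs0 : 0 < s) (hs1 : s < 1) (hβ0 : 0 < β) (hβ2 : β < 2*s)
    (h2 : ∀ k : ℤ, β - 2*s ≠ (k : ℝ)) (hs : s ≠ 1/2) :
    Tendsto (fun x => (2*s) * SB s β x) (𝓝[<] 1)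
      (𝓝 (-1 - Gamma (β+1) * Gamma (2*s-β) * sin (π*(β-s)) / (Gamma (2*s) * sin (π*s)))) := by
  have h := (lim_ne s β hs0 hs1 hβ0 hβ2).const_mul (-(1-2*s)⁻¹)
  have hne : 1-2*s ≠ 0 := by
    intro h; apply hs; linarith
  have g1 : Gamma (1 + (2-2*s)) = (2-2*s) * Gamma (2-2*s) := by
    rw [add_comm, Real.Gamma_add_one (by linarith)]
  have hg2 : 0 < Gamma (2-2*s) := Real.Gamma_pos_of_pos (by linarith)
  have hgs : 0 < Gamma (2*s) := Real.Gamma_pos_of_pos (by linarith)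
  have g2 : Gamma (2-2*s) = (1-2*s) * Gamma (1-2*s) := by
    rw [← Real.Gamma_add_one hne]; congr 1; ring
  have g3 := Real.Gamma_mul_Gamma_one_sub (2*s)
  have a1 := aux_gamma β hβ0 (by linarith)
  have a2 := aux_gamma2 (β+1-2*s) (by
    intro k hk
    apply h2 (k-1)
    push_cast; linarith)
  have hsin : 0 < sin (π*s) := Real.sin_pos_of_pos_of_lt_pi (by positivity) (by nlinarith [pi_pos])
  have hcos : cos (π*s) ≠ 0 := by
    intro h0
    obtain ⟨n, hn⟩ := Real.cos_eq_zero_iff.1 h0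
    have hh : s = (2*n+1)/2 := by
      have := pi_ne_zero
      field_simp at hn
      linarith
    have n0 : (-1:ℝ) < n := by linarith
    have n1 : (n:ℝ) < 1 := by linarith
    have : n = 0 := by
      have : -1 < n := by exact_mod_cast n0
      have : n < 1 := by exact_mod_cast n1
      omega
    rw [this] at hh
    apply hs
    rw [hh]; norm_num
  have e1 : 1 - (β+1-2*s) = 2*s-β := by ring
  have e2 : β+1-2*s+1 = β+2-2*s := by ring
  have e3 : β+1-2*s+2 = β+1+(2-2*s) := by ring
  have e4 : 2*s-β+(2-2*s) = 2-β := by ring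
  have s2 : sin (π*(2*s)) = 2 * sin (π*s) * cos (π*s) := by
    rw [← Real.sin_two_mul]; congr 1; ring
  have s3 : sin (π*β) + sin (π*(2*s-β) + π) = 2 * cos (π*s) * sin (π*(β-s)) := by
    rw [Real.sin_add_pi, show π*β = π*s + π*(β-s) by ring,
      show π*(2*s-β) = π*s - π*(β-s) by ring, Real.sin_add, Real.sin_sub]
    ring
  have s4 : sin (π*(β+1-2*s)) = sin (π*(2*s-β)) := by
    rw [← Real.sin_pi_sub]; congr 1; ring
  rw [Real.sin_add_pi] at s3
  rw [e1, e2, e3, s4] at a2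
  rw [s2] at g3
  have hgg : Gamma (1-2*s) = π / (2 * sin (π*s) * cos (π*s)) / Gamma (2*s) := by
    rw [← g3]; field_simp
  have key : (-(1-2*s)⁻¹) * ((1-2*s)*(2-2*s)*(Gamma 1 * Gamma (2-2*s) / Gamma (1 + (2-2*s)))
        - (β+1-2*s)*(β+2-2*s)*(Gamma (β+1) * Gamma (2-2*s) / Gamma (β+1 + (2-2*s)))
        + β*(1-β)*(Gamma (2*s-β) * Gamma (2-2*s) / Gamma (2*s-β + (2-2*s)))) =
      -1 - Gamma (β+1) * Gamma (2*s-β) * sin (π*(β-s)) / (Gamma (2*s) * sin (π*s)) := by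
    have k1 : (1-2*s)*(2-2*s)*(Gamma 1 * Gamma (2-2*s) / Gamma (1 + (2-2*s))) = 1-2*s := by
      have : 2-2*s ≠ 0 := by linarith
      rw [g1, Real.Gamma_one]
      generalize Gamma (2-2*s) = G at *
      have := hg2.ne'
      generalize 2-2*s = u at *
      field_simp
    have k2 : (β+1-2*s)*(β+2-2*s)*(Gamma (β+1) * Gamma (2-2*s) / Gamma (β+1 + (2-2*s))) =
        Gamma (β+1) * Gamma (2-2*s) * (Gamma (2*s-β) * sin (π*(2*s-β)) / π) := by
      rw [← a2]; ring
    have k3 : β*(1-β)*(Gamma (2*s-β) * Gamma (2-2*s) / Gamma (2*s-β + (2-2*s))) =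
        Gamma (2*s-β) * Gamma (2-2*s) * (Gamma (β+1) * sin (π*β) / π) := by
      rw [← a1, e4]; ring
    rw [k1, k2, k3]
    have k4 : 1-2*s - Gamma (β+1) * Gamma (2-2*s) * (Gamma (2*s-β) * sin (π*(2*s-β)) / π)
        + Gamma (2*s-β) * Gamma (2-2*s) * (Gamma (β+1) * sin (π*β) / π) =
        (1-2*s) + Gamma (β+1) * Gamma (2*s-β) * ((1-2*s) * Gamma (1-2*s)) / π
          * (2 * cos (π*s) * sin (π*(β-s))) := by
      rw [← s3, g2]; ring
    rw [k4, hgg]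
    have := pi_ne_zero
    generalize sin (π*(β-s)) = S1 at *
    generalize sin (π*s) = S2 at *
    generalize cos (π*s) = C at *
    generalize Gamma (2*s) = G1 at *
    generalize Gamma (2*s-β) = G2 at *
    generalize Gamma (β+1) = G3 at *
    have := hgs.ne'
    have := hsin.ne'
    generalize 1-2*s = u at *
    field_simp
    ring
  rw [key] at h
  refine h.congr (fun x => ?_)
  field_simp

def gK (β y : ℝ) : ℝ := (y ^ (-β) - y ^ β) * (1 - y) ^ (-1:ℝ)

lemma gK_int (β : ℝ) (hβ0 : 0 < β) (hβ1 : β < 1) : IntervalIntegrable (gK β) volume 0 1 := by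
  have hd : IntervalIntegrable (fun y : ℝ => 2 * y ^ (-β)) volume 0 1 :=
    (intervalIntegral.intervalIntegrable_rpow' (by linarith)).const_mul 2
  refine hd.mono_fun ?_ ?_
  · have : Measurable (gK β) := by unfold gK; fun_prop
    exact this.aestronglyMeasurable
  · rw [uIoc_of_le zero_le_one]
    filter_upwards [ae_restrict_mem measurableSet_Ioc] with y hy
    have hy0 := hy.1
    rcases eq_or_lt_of_le hy.2 with rfl | hy1
    · simp [gK]
    · have h1 : 0 < 1 - y := by linarith
      have e : y ^ β = y ^ (-β) * y ^ (2*β) := by rw [← Real.rpow_add hy0]; congr 1; ring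
      have e2 : y ^ (2*β) ≤ 1 := Real.rpow_le_one hy0.le hy.2 (by linarith)
      have e3 : y ^ (2:ℝ) ≤ y ^ (2*β) :=
        Real.rpow_le_rpow_of_exponent_ge hy0 hy.2 (by linarith)
      have e4 : y ^ (2:ℝ) = y^2 := by norm_cast
      have pos : 0 < y ^ (-β) := Real.rpow_pos_of_pos hy0 _
      unfold gK
      rw [Real.rpow_neg_one, e, Real.norm_of_nonneg, Real.norm_of_nonneg]
      · rw [show y ^ (-β) - y ^ (-β) * y ^ (2*β) = y ^ (-β) * (1 - y ^ (2*β)) by ring,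
          ← div_eq_mul_inv, div_le_iff₀ h1]
        have : 1 - y ^ (2*β) ≤ 2 * (1-y) := by
          rw [e4] at e3
          nlinarith
        nlinarith
      · positivity
      · apply mul_nonneg _ (by positivity)
        nlinarith

lemma gK_eq (β : ℝ) (hβ0 : 0 < β) (hβ1 : β < 1) :
    ∫ y in (0:ℝ)..1, gK β y = 1/β - π * (cos (π*β) / sin (π*β)) := by
  set F : ℕ → ℝ → ℝ := fun n y => y ^ ((n:ℝ) - β) - y ^ ((n:ℝ) + β) with hF
  have hi (n : ℕ) : IntervalIntegrable (F n) volume 0 1 := by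
    have : (0:ℝ) ≤ n := n.cast_nonneg
    exact (intervalIntegral.intervalIntegrable_rpow' (by linarith)).sub
      (intervalIntegral.intervalIntegrable_rpow' (by linarith))
  have hv (n : ℕ) : ∫ y in (0:ℝ)..1, F n y = -(1 / (β - (n+1)) + 1 / (β + (n+1))) := by
    have hn : (0:ℝ) ≤ n := n.cast_nonneg
    simp only [hF]
    rw [intervalIntegral.integral_sub (intervalIntegral.intervalIntegrable_rpow' (by linarith))
      (intervalIntegral.intervalIntegrable_rpow' (by linarith)),
      integral_rpow (Or.inl (by linarith)), integral_rpow (Or.inl (by linarith))]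
    rw [Real.one_rpow, Real.one_rpow, Real.zero_rpow (by linarith), Real.zero_rpow (by linarith)]
    have a1 : (n:ℝ) - β + 1 ≠ 0 := by linarith
    have a2 : (n:ℝ) + β + 1 ≠ 0 := by linarith
    have a3 : β - ((n:ℝ)+1) ≠ 0 := by linarith
    have a4 : β + ((n:ℝ)+1) ≠ 0 := by linarith
    rw [show β - ((n:ℝ)+1) = -((n:ℝ) - β + 1) by ring, show β + ((n:ℝ)+1) = (n:ℝ)+β+1 by ring]
    field_simp
    ring
  have hz : (β : ℂ) ∈ Complex.integerComplement := by
    rw [Complex.mem_integerComplement_iff]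
    rintro ⟨n, hn⟩
    have : (n:ℝ) = β := by exact_mod_cast hn
    rw [← this] at hβ0 hβ1
    norm_cast at *
    omega
  have hsum : Summable (fun n : ℕ => -(1 / (β - (n+1)) + 1 / (β + (n+1)))) := by
    have := (summable_cotTerm hz).neg
    rw [← Complex.summable_ofReal]
    refine this.congr (fun n => ?_)
    simp [cotTerm]
  have htsum : ∑' n : ℕ, -(1 / (β - (n+1)) + 1 / (β + (n+1)))
      = 1/β - π * (cos (π*β) / sin (π*β)) := by
    rw [tsum_neg]
    have := cot_series_rep' hz
    rw [Complex.cot_eq_cos_div_sin] at this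
    have h2 : π * (cos (π*β) / sin (π*β)) - 1/β = ∑' n : ℕ, (1 / (β - (n+1)) + 1 / (β + (n+1))) := by
      exact_mod_cast this
    rw [← h2]; ring
  have key := hasSum_integral_of_summable_integral_norm (μ := volume.restrict (Ioc (0:ℝ) 1))
    (F := F) (fun n => (hi n).1) ?_
  · rw [← htsum, intervalIntegral.integral_of_le zero_le_one]
    have e : ∫ y in Ioc (0:ℝ) 1, gK β y = ∫ y in Ioc (0:ℝ) 1, ∑' n, F n y := by
      apply setIntegral_congr_fun measurableSet_Ioc
      intro y hy
      have hy0 := hy.1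
      rcases eq_or_lt_of_le hy.2 with rfl | hy1
      · simp [gK, hF]
      · have : ∀ n, F n y = (y ^ (-β) - y ^ β) * y ^ n := by
          intro n
          simp only [hF]
          rw [sub_eq_add_neg (n:ℝ) β, Real.rpow_add hy0, Real.rpow_add hy0,
            Real.rpow_natCast]
          ring
        simp only [this]
        rw [tsum_mul_left, tsum_geometric_of_lt_one hy0.le hy1, gK, Real.rpow_neg_one]
    rw [e, ← key.tsum_eq]
    congr 1
    ext n
    rw [← hv n, intervalIntegral.integral_of_le zero_le_one]
  · refine hsum.congr (fun n => ?_)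
    rw [← hv n, intervalIntegral.integral_of_le zero_le_one]
    apply setIntegral_congr_fun measurableSet_Ioc
    intro y hy
    simp only [hF]
    rw [Real.norm_of_nonneg]
    have := Real.rpow_le_rpow_of_exponent_ge hy.1 hy.2
      (show (n:ℝ) - β ≤ (n:ℝ) + β by linarith)
    linarith

lemma lim_half (β : ℝ) (hβ0 : 0 < β) (hβ1 : β < 1) :
    Tendsto (fun x => (2*(1/2)) * SB (1/2) β x) (𝓝[<] 1)
      (𝓝 (-1 - Gamma (β+1) * Gamma (2*(1/2)-β) * sin (π*(β-1/2)) /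
        (Gamma (2*(1/2)) * sin (π*(1/2))))) := by
  have hK := (tendsto_prim _ (gK_int β hβ0 hβ1)).const_mul (-β)
  rw [gK_eq β hβ0 hβ1] at hK
  have b1 := (tendsto_bdA (1/2) β (by norm_num))
  have h := hK.add b1
  have hsin : 0 < sin (π*β) :=
    Real.sin_pos_of_pos_of_lt_pi (by positivity) (by nlinarith [pi_pos])
  have key : -β * (1/β - π * (cos (π*β) / sin (π*β))) + 0 =
      (-1 - Gamma (β+1) * Gamma (2*(1/2)-β) * sin (π*(β-1/2)) /
        (Gamma (2*(1/2)) * sin (π*(1/2)))) := by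
    have e1 : sin (π*(β-1/2)) = -cos (π*β) := by
      rw [← Real.sin_sub_pi_div_two]; congr 1; ring
    have e2 : sin (π*(1/2)) = 1 := by
      rw [mul_one_div, Real.sin_pi_div_two]
    have e3 := Real.Gamma_mul_Gamma_one_sub β
    rw [e1, e2, show (2:ℝ)*(1/2) = 1 by norm_num, Real.Gamma_one, Real.Gamma_add_one hβ0.ne',
      mul_assoc β, e3]
    field_simp
    ring
  rw [key] at h
  refine h.congr' ?_
  filter_upwards [Ioo_mem_nhdsLT (zero_lt_one : (0:ℝ) < 1)] with x hx
  have r (p : ℝ) (hp : 0 < p) := hB_rec p (-(2*(1/2))) x hp hx.1.le hx.2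
  have r1 := r 1 one_pos
  have r2 := r (β+1) (by linarith)
  have r3 := r (2*(1/2)) (by linarith)
  have r4 := r (2*(1/2)-β) (by linarith)
  have eK : ∫ y in (0:ℝ)..x, gK β y =
      hB (2*(1/2)-β) (-(2*(1/2))+1) x - hB (β+1) (-(2*(1/2))+1) x := by
    unfold hB
    rw [← intervalIntegral.integral_sub
      (int_hB _ _ _ _ (by linarith) one_pos hx.2) (int_hB _ _ _ _ (by linarith) one_pos hx.2)]
    apply intervalIntegral.integral_congr
    intro y _
    simp only [gK]
    rw [show (2:ℝ)*(1/2)-β-1 = -β by ring, show β+1-1 = β by ring,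
      show -((2:ℝ)*(1/2))+1-1 = -1 by ring]
    ring
  rw [eK]
  unfold SB
  linear_combination (r1 - r2 + r3 - r4)

def fI (s β y : ℝ) : ℝ := (1 - y ^ β) / |1 - y| ^ (1 + 2*s)

lemma part_left (s β x : ℝ) (hβ0 : 0 < β) (hx0 : 0 < x) (hx : x < 1) :
    IntegrableOn (fI s β) (Ioo 0 x) ∧
    ∫ y in Ioo 0 x, fI s β y = hB 1 (-(2*s)) x - hB (β+1) (-(2*s)) x := by
  have i1 := int_hB 1 (-(2*s)) 0 x one_pos one_pos hx
  have i2 := int_hB (β+1) (-(2*s)) 0 x (by linarith) one_pos hx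
  have e : EqOn (fun y : ℝ => y ^ ((1:ℝ) - 1) * (1 - y) ^ (-(2*s) - 1)
      - y ^ (β + 1 - 1) * (1 - y) ^ (-(2*s) - 1)) (fI s β) (Ioo 0 x) := by
    intro y hy
    have h1 : 0 < 1 - y := by linarith [hy.2]
    simp only [fI]
    rw [abs_of_pos h1, sub_self, Real.rpow_zero, add_sub_cancel_right,
      show -(2*s) - 1 = -(1+2*s) by ring, Real.rpow_neg h1.le]
    ring
  constructor
  · exact ((i1.sub i2).1.mono_set Ioo_subset_Ioc_self).congr_fun e measurableSet_Ioo
  · rw [← setIntegral_congr_fun measurableSet_Ioo e]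
    unfold hB
    rw [← intervalIntegral.integral_sub i1 i2, intervalIntegral.integral_of_le hx0.le,
      integral_Ioc_eq_integral_Ioo]

lemma part_right (s β ε : ℝ) (hs0 : 0 < s) (hβ2 : β < 2*s) (hε : 0 < ε) :
    IntegrableOn (fI s β) (Ioi (1+ε)) ∧
    ∫ y in Ioi (1+ε), fI s β y =
      hB (2*s) (-(2*s)) (1+ε)⁻¹ - hB (2*s-β) (-(2*s)) (1+ε)⁻¹ := by
  have hx0 : 0 < (1+ε)⁻¹ := by positivity
  have hx1 : (1+ε)⁻¹ < 1 := inv_lt_one_of_one_lt₀ (by linarith)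
  have i1 := int_hB (2*s) (-(2*s)) 0 (1+ε)⁻¹ (by linarith) one_pos hx1
  have i2 := int_hB (2*s-β) (-(2*s)) 0 (1+ε)⁻¹ (by linarith) one_pos hx1
  set G : ℝ → ℝ := fun y : ℝ => y ^ (2*s - 1) * (1 - y) ^ (-(2*s) - 1)
      - y ^ (2*s - β - 1) * (1 - y) ^ (-(2*s) - 1) with hG
  have iG : IntegrableOn G (Ioo 0 (1+ε)⁻¹) := (i1.sub i2).1.mono_set Ioo_subset_Ioc_self
  have e : EqOn (fun x : ℝ => (|(-1:ℝ)| * x ^ ((-1:ℝ) - 1)) •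
      (Ioi (1+ε)).indicator (fI s β) (x ^ (-1:ℝ))) ((Iio (1+ε)⁻¹).indicator G) (Ioi 0) := by
    intro x hx
    have hx : 0 < x := hx
    simp only
    rw [Real.rpow_neg_one]
    by_cases hxx : x < (1+ε)⁻¹
    · have h2 : 1 + ε < x⁻¹ := (lt_inv_comm₀ hx (by positivity)).1 hxx
      rw [indicator_of_mem (show x⁻¹ ∈ Ioi (1+ε) from h2),
        indicator_of_mem (show x ∈ Iio (1+ε)⁻¹ from hxx)]
      have hx1 : 0 < 1 - x := by linarith
      have e1 : |1 - x⁻¹| = (1 - x) * x⁻¹ := by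
        rw [abs_of_neg (by linarith)]; field_simp; ring
      simp only [fI, hG, e1, smul_eq_mul]
      rw [Real.mul_rpow hx1.le (by positivity), Real.inv_rpow hx.le, Real.inv_rpow hx.le,
        show -(2*s) - 1 = -(1+2*s) by ring, Real.rpow_neg hx1.le,
        show 2*s - 1 = (-1-1) + (1+2*s) by ring,
        show 2*s - β - 1 = (-1-1) + (1+2*s) + (-β) by ring, Real.rpow_add hx (-1-1+(1+2*s)),
        Real.rpow_add hx (-1-1) (1+2*s), Real.rpow_neg hx.le β]
      have p1 : 0 < x ^ (1+2*s) := by positivity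
      have p2 : 0 < (1-x) ^ (1+2*s) := by positivity
      have p3 : 0 < x ^ β := by positivity
      rw [abs_neg, abs_one, one_mul]
      generalize x ^ (1+2*s) = A at *
      generalize (1-x) ^ (1+2*s) = B at *
      generalize x ^ β = C at *
      generalize x ^ ((-1:ℝ)-1) = D at *
      field_simp
    · have h2 : ¬ 1 + ε < x⁻¹ := fun h => hxx ((lt_inv_comm₀ (by positivity) hx).1 h)
      rw [indicator_of_notMem (show x⁻¹ ∉ Ioi (1+ε) from h2),
        indicator_of_notMem (show x ∉ Iio (1+ε)⁻¹ from hxx), smul_zero]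
  have hset : Iio (1+ε)⁻¹ ∩ Ioi (0:ℝ) = Ioo 0 (1+ε)⁻¹ := by
    ext; simp [and_comm]
  have hset2 : Ioi (1+ε) ∩ Ioi (0:ℝ) = Ioi (1+ε) := by
    rw [inter_eq_left]; exact Ioi_subset_Ioi (by linarith)
  constructor
  · have := (integrableOn_Ioi_comp_rpow_iff ((Ioi (1+ε)).indicator (fI s β))
      (p := -1) (by norm_num)).1 (by
        rw [integrableOn_congr_fun e measurableSet_Ioi, IntegrableOn,
          integrable_indicator_iff measurableSet_Iio, IntegrableOn,
          Measure.restrict_restrict measurableSet_Iio, hset]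
        exact iG)
    rwa [IntegrableOn, integrable_indicator_iff measurableSet_Ioi, IntegrableOn,
          Measure.restrict_restrict measurableSet_Ioi, hset2] at this
  · have := integral_comp_rpow_Ioi ((Ioi (1+ε)).indicator (fI s β)) (p := -1) (by norm_num)
    rw [setIntegral_congr_fun measurableSet_Ioi e, setIntegral_indicator measurableSet_Iio,
      setIntegral_indicator measurableSet_Ioi, inter_comm, hset, inter_comm, hset2] at this
    rw [← this]
    unfold hB
    rw [← intervalIntegral.integral_sub i1 i2, intervalIntegral.integral_of_le hx0.le,
      integral_Ioc_eq_integral_Ioo]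

lemma err_tendsto_s4 (s β : ℝ) (hs0 : 0 < s) (hs1 : s < 1) (hβ2 : β < 2*s) :
    Tendsto (fun ε : ℝ => (hB (2*s) (-(2*s)) (1+ε)⁻¹ - hB (2*s-β) (-(2*s)) (1+ε)⁻¹) -
      (hB (2*s) (-(2*s)) (1-ε) - hB (2*s-β) (-(2*s)) (1-ε))) (𝓝[>] 0) (𝓝 0) := by
  set f : ℝ → ℝ := fun y => y ^ (2*s-1) - y ^ (2*s-β-1) with hf
  have hq := (tendsto_quot f ((dpow _).sub (dpow _)) (by simp [hf])).norm
  set C := ‖-deriv f 1‖ + 1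
  have hev : ∀ᶠ y in 𝓝[<] (1:ℝ), ‖f y / (1-y)‖ < C :=
    hq.eventually_lt_const (by simp [C])
  obtain ⟨l, hl1, hl⟩ := (mem_nhdsLT_iff_exists_Ioo_subset).1 hev
  have hl1 : l < 1 := hl1
  have hC : 0 ≤ C := by positivity
  have hlim : Tendsto (fun ε : ℝ => C * 2^(2*s) * ε ^ (2-2*s)) (𝓝[>] 0) (𝓝 0) := by
    have : ContinuousAt (fun x : ℝ => C * 2^(2*s) * x ^ (2-2*s)) 0 := by
      apply ContinuousAt.mul continuousAt_const
      exact ContinuousAt.rpow_const continuousAt_id (Or.inr (by linarith))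
    have h := this.tendsto
    simp only [Real.zero_rpow (show 2-2*s ≠ 0 by linarith), mul_zero] at h
    exact h.mono_left nhdsWithin_le_nhds
  apply squeeze_zero_norm' _ hlim
  have hm : 0 < min (1-l) 1 := lt_min (by linarith) one_pos
  filter_upwards [Ioo_mem_nhdsGT hm] with ε hε
  have hε0 := hε.1
  have hε1 : ε < 1 := hε.2.trans_le (min_le_right _ _)
  have hεl : ε < 1 - l := hε.2.trans_le (min_le_left _ _)
  have hx1 : (1+ε)⁻¹ < 1 := inv_lt_one_of_one_lt₀ (by linarith)
  have hlen : (1+ε)⁻¹ - (1-ε) = ε^2 / (1+ε) := by field_simp; ring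
  have hlen0 : 0 ≤ ε^2 / (1+ε) := by positivity
  have hlen1 : ε^2 / (1+ε) ≤ ε^2 := div_le_self (by positivity) (by linarith)
  have hgap : ε/2 ≤ 1 - (1+ε)⁻¹ := by
    have : 1 - (1+ε)⁻¹ = ε/(1+ε) := by field_simp; ring
    rw [this]
    exact div_le_div_of_nonneg_left hε0.le (by linarith) (by linarith)
  have j (p a : ℝ) (hp : 0 < p) (ha : a < 1) := int_hB p (-(2*s)) 0 a hp one_pos ha
  have hp1 : 0 < 2*s := by linarith
  have hp2 : 0 < 2*s-β := by linarith
  have eq : (hB (2*s) (-(2*s)) (1+ε)⁻¹ - hB (2*s-β) (-(2*s)) (1+ε)⁻¹) -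
      (hB (2*s) (-(2*s)) (1-ε) - hB (2*s-β) (-(2*s)) (1-ε)) =
      ∫ y in (1-ε)..(1+ε)⁻¹, f y * (1-y) ^ (-(2*s) - 1) := by
    unfold hB
    rw [sub_sub_sub_comm, intervalIntegral.integral_interval_sub_left (j _ _ hp1 hx1)
      (j _ _ hp1 (by linarith)), intervalIntegral.integral_interval_sub_left (j _ _ hp2 hx1)
      (j _ _ hp2 (by linarith)), ← intervalIntegral.integral_sub
      (int_hB _ _ _ _ hp1 (by linarith) hx1) (int_hB _ _ _ _ hp2 (by linarith) hx1)]
    congr 1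
    ext y
    simp only [hf]; ring
  rw [eq]
  have bd := intervalIntegral.norm_integral_le_of_norm_le_const (a := 1-ε) (b := (1+ε)⁻¹)
    (f := fun y => f y * (1-y) ^ (-(2*s) - 1)) (C := C * (ε/2)^(-(2*s))) (by
      intro y hy
      rw [uIoc_of_le (by linarith)] at hy
      have hy1 : 0 < 1 - y := by linarith [hy.2]
      have h1 : ‖f y / (1-y)‖ < C := hl ⟨by linarith [hy.1], by linarith⟩
      have h2 : f y * (1-y) ^ (-(2*s) - 1) = (f y / (1-y)) * (1-y) ^ (-(2*s)) := by
        rw [Real.rpow_sub_one hy1.ne']; field_simp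
      rw [h2, norm_mul]
      apply mul_le_mul h1.le _ (norm_nonneg _) hC
      rw [Real.norm_of_nonneg (by positivity)]
      exact Real.rpow_le_rpow_of_nonpos (by positivity) (by linarith [hy.2]) (by linarith))
  refine bd.trans ?_
  rw [hlen, abs_of_nonneg hlen0]
  have e1 : (ε/2)^(-(2*s)) = 2^(2*s) * ε^(-(2*s)) := by
    rw [Real.div_rpow hε0.le (by norm_num), Real.rpow_neg (show (0:ℝ) ≤ 2 by norm_num)]
    field_simp
  have e2 : ε^(2-2*s) = ε^(-(2*s)) * ε^2 := by
    rw [← Real.rpow_natCast, ← Real.rpow_add hε0]; congr 1; push_cast; ring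
  rw [e1, e2]
  have : 0 ≤ C * (2^(2*s) * ε^(-(2*s))) := by positivity
  calc _ ≤ C * (2^(2*s) * ε^(-(2*s))) * ε^2 := mul_le_mul_of_nonneg_left hlen1 this
    _ = _ := by ring

/-- **Lemma 2.5, characterization of the admissible homogeneities.**
For `s ∈ (0,1)` and `β ∈ (0,2s)` with `β-s, β-2s ∉ ℤ`, the principal value
`p.v.∫₀^∞ (1-y^β)/|1-y|^{1+2s} dy` (the regional fractional Laplacian of `x ↦ x^β` on
`ℝ₊` at `x = 1`, divided by `c_{1,s}`) vanishes if and only if `β` solves equation (E):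
`Γ(β+1)Γ(2s-β)sin(π(β-s)) = -Γ(2s)sin(πs)`. -/
theorem regional_power_pv_eq_zero_iff
    (s β : ℝ) (hs0 : 0 < s) (hs1 : s < 1) (hβ0 : 0 < β) (hβ2 : β < 2*s)
    (h1 : ∀ k : ℤ, β - s ≠ (k : ℝ)) (h2 : ∀ k : ℤ, β - 2*s ≠ (k : ℝ)) :
    Tendsto (fun ε : ℝ =>
        ∫ y in {y : ℝ | 0 < y ∧ ε < |y - 1|}, (1 - y ^ β) / |1 - y| ^ (1 + 2*s))
      (nhdsWithin 0 (Set.Ioi 0)) (nhds 0)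
    ↔ Real.Gamma (β+1) * Real.Gamma (2*s-β) * Real.sin (π*(β-s))
        = -(Real.Gamma (2*s) * Real.sin (π*s)) := by
  have hL : Tendsto (fun x => (2*s) * SB s β x) (𝓝[<] 1)
      (𝓝 (-1 - Gamma (β+1) * Gamma (2*s-β) * sin (π*(β-s)) / (Gamma (2*s) * sin (π*s)))) := by
    rcases eq_or_ne s (1/2) with rfl | hne
    · exact lim_half β hβ0 (by linarith)
    · exact lim_ne' s β hs0 hs1 hβ0 hβ2 h2 hne
  have hmap : Tendsto (fun ε : ℝ => 1 - ε) (𝓝[>] 0) (𝓝[<] 1) := by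
    apply tendsto_nhdsWithin_of_tendsto_nhds_of_eventually_within
    · have : ContinuousAt (fun ε : ℝ => 1 - ε) 0 := by fun_prop
      have h := this.tendsto
      rw [sub_zero] at h
      exact h.mono_left nhdsWithin_le_nhds
    · filter_upwards [self_mem_nhdsWithin] with ε hε
      have : 0 < ε := hε
      simpa using this
  have hA := ((hL.comp hmap).const_mul (2*s)⁻¹).add (err_tendsto_s4 s β hs0 hs1 hβ2)
  rw [add_zero] at hA
  have hPV : Tendsto (fun ε : ℝ =>
        ∫ y in {y : ℝ | 0 < y ∧ ε < |y - 1|}, (1 - y ^ β) / |1 - y| ^ (1 + 2*s))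
      (𝓝[>] 0) (𝓝 ((2*s)⁻¹ * (-1 - Gamma (β+1) * Gamma (2*s-β) * sin (π*(β-s)) /
        (Gamma (2*s) * sin (π*s))))) := by
    refine hA.congr' ?_
    filter_upwards [Ioo_mem_nhdsGT (zero_lt_one : (0:ℝ) < 1)] with ε hε
    have hset : {y : ℝ | 0 < y ∧ ε < |y - 1|} = Ioo 0 (1-ε) ∪ Ioi (1+ε) := by
      ext y
      simp only [mem_ofPred_eq, mem_union, mem_Ioo, mem_Ioi, lt_abs]
      constructor
      · rintro ⟨h, h | h⟩
        · right; linarith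
        · left; constructor <;> linarith
      · rintro (⟨h, h'⟩ | h)
        · exact ⟨h, Or.inr (by linarith)⟩
        · exact ⟨by linarith [hε.1], Or.inl (by linarith)⟩
    obtain ⟨l1, l2⟩ := part_left s β (1-ε) hβ0 (by linarith [hε.2]) (by linarith [hε.1])
    obtain ⟨r1, r2⟩ := part_right s β ε hs0 hβ2 hε.1
    have hd : Disjoint (Ioo 0 (1-ε)) (Ioi (1+ε)) := by
      rw [Set.disjoint_left]
      intro y hy hy'
      have h1 := hy.2
      have h2 : 1 + ε < y := hy'
      linarith [hε.1]
    have hu := setIntegral_union hd measurableSet_Ioi l1 r1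
    rw [l2, r2] at hu
    rw [hset]
    refine Eq.trans ?_ hu.symm
    simp only [Function.comp_def, SB]
    field_simp
    ring
  have hgs : 0 < Gamma (2*s) := Real.Gamma_pos_of_pos (by linarith)
  have hsin : 0 < sin (π*s) := Real.sin_pos_of_pos_of_lt_pi (by positivity) (by nlinarith [pi_pos])
  have hD : Gamma (2*s) * sin (π*s) ≠ 0 := by positivity
  have hiff : (2*s)⁻¹ * (-1 - Gamma (β+1) * Gamma (2*s-β) * sin (π*(β-s)) /
        (Gamma (2*s) * sin (π*s))) = 0 ↔ Real.Gamma (β+1) * Real.Gamma (2*s-β) * Real.sin (π*(β-s))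
        = -(Real.Gamma (2*s) * Real.sin (π*s)) := by
    rw [mul_eq_zero, or_iff_right (by positivity : (2*s)⁻¹ ≠ 0), sub_eq_zero, eq_div_iff hD]
    constructor <;> intro h <;> linarith
  rw [← hiff]
  constructor
  · intro h
    exact tendsto_nhds_unique hPV h
  · intro h
    rw [h] at hPV
    exact hPV
end
end
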